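/- arXiv:1312.1653 — 2 statements merged into one kernel-verified Lean document; each statement's English description precedes it below -/
import Mathlib

section
/- Let n ≥ 1, let Σ be an n×n real positive definite matrix, let k ∈ ℝ^n and σ > 0 be such that the (n+1)×(n+1) block matrix Δ := σ² [[1, kᵀ], [k, Σ]] is positive definite, and let y ∈ ℝ^n. Let 𝟙 denote the all-ones vector (in ℝ^n or ℝ^{n+1} as appropriate). For m > 0 define g_m(z) := [∫_{−m}^{m} exp(−½ ((z,y) − u𝟙)ᵀ Δ⁻¹ ((z,y) − u𝟙)) du] / [∫_ℝ ∫_{−m}^{m} exp(−½ ((z',y) − u𝟙)ᵀ Δ⁻¹ ((z',y) − u𝟙)) du dz'], where (z,y) ∈ ℝ^{n+1} is the vector with first coordinate z followed by y. Then for every z ∈ ℝ, as m → ∞, g_m(z) converges to the density at z of the one-dimensional Gaussian distribution with mean μ + kᵀ Σ⁻¹ (y − μ𝟙), where μ := (𝟙ᵀ Σ⁻¹ y)/(𝟙ᵀ Σ⁻¹ 𝟙), and variance σ² (1 − kᵀ Σ⁻¹ k + (1 − 𝟙ᵀ Σ⁻¹ k)² / (𝟙ᵀ Σ⁻¹ 𝟙)).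 -/
open Matrix MeasureTheory Real Filter

/-!
By the Schur complement formula for the inverse of `Δ = [[c, kᵀ], [k, S]]`, and by Pythagoras'
theorem for the generalized least squares fit `β` of `y` by multiples of `p`, the weight
`exp (-½ ((z, y) - u (a, p))ᵀ Δ⁻¹ ((z, y) - u (a, p)))` is, up to a factor independent of `z` and
`u`, the product of the densities of `N(β, 1 / pᵀS⁻¹p)` at `u` and of
`N(kᵀS⁻¹y + u (a - pᵀS⁻¹k), c - kᵀS⁻¹k)` at `z`. This reads as a Gaussian prior on `u` times a
Gaussian likelihood of `z`, so Bayes' formula rewrites it as the Gaussian marginal density of `z`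
times the posterior density of `u`. As the windows exhaust `ℝ`, the integral over `u` leaves the
marginal in the numerator and, by Fubini, its total mass `1` in the denominator.
-/

open ProbabilityTheory
open scoped NNReal Topology

section IteratedIntegral

variable {X ι : Type*} [MeasurableSpace X] {ν : Measure X} [SFinite ν]
  {l : Filter ι} [l.IsCountablyGenerated] {lo hi : ι → ℝ}

theorem tendsto_integral_intervalIntegral {E : Type*} [NormedAddCommGroup E] [NormedSpace ℝ E]
    {f : X → ℝ → E} (hf : Integrable (Function.uncurry f) (ν.prod volume))
    (hlo : Tendsto lo l atBot) (hhi : Tendsto hi l atTop) :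
    Tendsto (fun i => ∫ x, (∫ u in lo i..hi i, f x u) ∂ν) l (𝓝 (∫ x, (∫ u, f x u) ∂ν)) := by
  have hswap (i : ι) :
      ∫ x, (∫ u in lo i..hi i, f x u) ∂ν = ∫ u in lo i..hi i, (∫ x, f x u ∂ν) :=
    (intervalIntegral_integral_swap (f := fun u x => f x u)
      (hf.swap.mono_measure (Measure.prod_mono Measure.restrict_le_self le_rfl))).symm
  simp_rw [hswap, integral_integral_swap hf]
  exact intervalIntegral_tendsto_integral hf.integral_prod_right hlo hhi

theorem tendsto_intervalIntegral_div_integral_intervalIntegral {f : X → ℝ → ℝ}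
    (hf : Integrable (Function.uncurry f) (ν.prod volume)) (hf₀ : ∫ x, (∫ u, f x u) ∂ν ≠ 0)
    {x : X} (hfx : Integrable (f x)) (hlo : Tendsto lo l atBot) (hhi : Tendsto hi l atTop) :
    Tendsto (fun i => (∫ u in lo i..hi i, f x u) / ∫ x', (∫ u in lo i..hi i, f x' u) ∂ν) l
      (𝓝 ((∫ u, f x u) / ∫ x', (∫ u, f x' u) ∂ν)) :=
  (intervalIntegral_tendsto_integral hfx hlo hhi).div
    (tendsto_integral_intervalIntegral hf hlo hhi) hf₀

end IteratedIntegral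

section GaussianMixture

theorem exp_neg_sq_div_eq_sqrt_mul_gaussianPDFReal {v : ℝ} (hv : 0 < v) (μ x : ℝ) :
    exp (-(x - μ) ^ 2 / (2 * v)) = √(2 * π * v) * gaussianPDFReal μ v.toNNReal x := by
  rw [gaussianPDFReal, coe_toNNReal v hv.le, mul_inv_cancel_left₀ (by positivity)]

theorem gaussianPDFReal_toNNReal {v : ℝ} (hv : 0 ≤ v) (μ x : ℝ) :
    gaussianPDFReal μ v.toNNReal x =
      (2 * π * v) ^ (-(1 : ℝ) / 2) * exp (-(x - μ) ^ 2 / (2 * v)) := by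
  rw [gaussianPDFReal, coe_toNNReal v hv, neg_div 2, rpow_neg (by positivity), ← sqrt_eq_rpow]

variable (μ b d : ℝ) {v w : ℝ≥0}

/- Bayes' formula for the prior `N(μ, v)` and the likelihood `N(b + u d, w)`: evidence times
posterior. -/
theorem gaussianPDFReal_mul_gaussianPDFReal_affine (hv : v ≠ 0) (hw : w ≠ 0) (z u : ℝ) :
    gaussianPDFReal μ v u * gaussianPDFReal (b + u * d) w z =
      gaussianPDFReal (b + μ * d) (w + ‖d‖₊ ^ 2 * v) z *
        gaussianPDFReal (μ + (z - b - μ * d) * d * v / (w + d ^ 2 * v))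
          (v * w / (w + ‖d‖₊ ^ 2 * v)) u := by
  simp only [gaussianPDFReal, NNReal.coe_add, NNReal.coe_mul, NNReal.coe_div, NNReal.coe_pow,
    coe_nnnorm, norm_eq_abs, sq_abs]
  have hnorm : √(2 * π * v) * √(2 * π * w) =
      √(2 * π * (w + d ^ 2 * v)) * √(2 * π * (v * w / (w + d ^ 2 * v))) := by
    rw [← sqrt_mul (by positivity), ← sqrt_mul (by positivity)]
    congr 1
    field_simp
  rw [mul_mul_mul_comm, ← mul_inv, hnorm, ← exp_add, mul_mul_mul_comm, ← mul_inv, ← exp_add]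
  congr 2
  field_simp
  ring

theorem integrable_gaussianPDFReal_mul_gaussianPDFReal_affine (hv : v ≠ 0) (hw : w ≠ 0) (z : ℝ) :
    Integrable fun u => gaussianPDFReal μ v u * gaussianPDFReal (b + u * d) w z := by
  simp_rw [gaussianPDFReal_mul_gaussianPDFReal_affine μ b d hv hw]
  exact (integrable_gaussianPDFReal _ _).const_mul _

theorem integral_gaussianPDFReal_mul_gaussianPDFReal_affine (hv : v ≠ 0) (hw : w ≠ 0) (z : ℝ) :
    ∫ u, gaussianPDFReal μ v u * gaussianPDFReal (b + u * d) w z =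
      gaussianPDFReal (b + μ * d) (w + ‖d‖₊ ^ 2 * v) z := by
  simp_rw [gaussianPDFReal_mul_gaussianPDFReal_affine μ b d hv hw]
  rw [integral_const_mul, integral_gaussianPDFReal_eq_one _ (by positivity), mul_one]

theorem integrable_uncurry_gaussianPDFReal_mul_gaussianPDFReal_affine (hw : w ≠ 0) :
    Integrable (Function.uncurry fun z u : ℝ =>
      gaussianPDFReal μ v u * gaussianPDFReal (b + u * d) w z) (volume.prod volume) := by
  have hmeas : Continuous (Function.uncurry fun z u : ℝ =>
      gaussianPDFReal μ v u * gaussianPDFReal (b + u * d) w z) := by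
    unfold gaussianPDFReal
    fun_prop
  rw [integrable_prod_iff' hmeas.aestronglyMeasurable]
  refine ⟨.of_forall fun u =>
    (integrable_gaussianPDFReal (b + u * d) w).const_mul (gaussianPDFReal μ v u), ?_⟩
  have hnorm (u z : ℝ) : ‖gaussianPDFReal μ v u * gaussianPDFReal (b + u * d) w z‖ =
      gaussianPDFReal μ v u * gaussianPDFReal (b + u * d) w z :=
    norm_of_nonneg (mul_nonneg (gaussianPDFReal_nonneg _ _ _) (gaussianPDFReal_nonneg _ _ _))
  simpa only [Function.uncurry_apply_pair, hnorm, integral_const_mul,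
    integral_gaussianPDFReal_eq_one _ hw, mul_one] using integrable_gaussianPDFReal μ v

theorem tendsto_truncated_gaussian_mixture {ι : Type*} {l : Filter ι} [l.IsCountablyGenerated]
    {lo hi : ι → ℝ} (hlo : Tendsto lo l atBot) (hhi : Tendsto hi l atTop)
    (hv : v ≠ 0) (hw : w ≠ 0) (z : ℝ) :
    Tendsto (fun i =>
        (∫ u in lo i..hi i, gaussianPDFReal μ v u * gaussianPDFReal (b + u * d) w z) /
          ∫ z', ∫ u in lo i..hi i, gaussianPDFReal μ v u * gaussianPDFReal (b + u * d) w z') l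
      (𝓝 (gaussianPDFReal (b + μ * d) (w + ‖d‖₊ ^ 2 * v) z)) := by
  have hmass : ∫ z', ∫ u, gaussianPDFReal μ v u * gaussianPDFReal (b + u * d) w z' = 1 := by
    simp_rw [integral_gaussianPDFReal_mul_gaussianPDFReal_affine μ b d hv hw]
    exact integral_gaussianPDFReal_eq_one _ (by positivity)
  have hlim := tendsto_intervalIntegral_div_integral_intervalIntegral
    (integrable_uncurry_gaussianPDFReal_mul_gaussianPDFReal_affine μ b d hw)
    (hmass.trans_ne one_ne_zero)
    (integrable_gaussianPDFReal_mul_gaussianPDFReal_affine μ b d hv hw z) hlo hhi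
  rwa [hmass, div_one, integral_gaussianPDFReal_mul_gaussianPDFReal_affine μ b d hv hw] at hlim

end GaussianMixture

section SchurComplement

variable {m n : Type*} [Fintype n] [DecidableEq n]

theorem dotProduct_inv_fromBlocks_mulVec {R : Type*} [CommRing R] [Fintype m] [DecidableEq m]
    {A : Matrix m m R} {B : Matrix m n R} {C : Matrix n m R} {D : Matrix n n R}
    (hD : IsUnit D) (hschur : IsUnit (A - B * D⁻¹ * C))
    (x x' : m → R) (y y' : n → R) :
    Sum.elim x y ⬝ᵥ (fromBlocks A B C D)⁻¹ *ᵥ Sum.elim x' y' =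
      (x - y ᵥ* D⁻¹ ᵥ* C) ⬝ᵥ (A - B * D⁻¹ * C)⁻¹ *ᵥ (x' - B *ᵥ D⁻¹ *ᵥ y') +
        y ⬝ᵥ D⁻¹ *ᵥ y' := by
  cases hD.nonempty_invertible
  rw [← invOf_eq_nonsing_inv D] at hschur ⊢
  cases hschur.nonempty_invertible
  let := fromBlocks₂₂Invertible A B C D
  rw [← invOf_eq_nonsing_inv, invOf_fromBlocks₂₂_eq, ← invOf_eq_nonsing_inv]
  simp only [fromBlocks_mulVec, sumElim_dotProduct_sumElim, Sum.elim_comp_inl,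
    Sum.elim_comp_inr, neg_mulVec, add_mulVec, mulVec_sub, dotProduct_add,
    dotProduct_neg, dotProduct_sub, sub_dotProduct, sub_vecMul, dotProduct_mulVec, vecMul_vecMul,
    Matrix.mul_assoc]
  ring

open scoped ComplexOrder in
theorem posDef_schur_complement {𝕜 : Type*} [RCLike 𝕜] [Finite m] {A : Matrix m m 𝕜}
    {B : Matrix m n 𝕜} {D : Matrix n n 𝕜} (h : (fromBlocks A B Bᴴ D).PosDef) :
    (A - B * D⁻¹ * Bᴴ).PosDef := by
  classical
  have := Fintype.ofFinite m
  have hD : D.PosDef := h.submatrix Sum.inr_injective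
  let := hD.isUnit.invertible
  have hsemidef := (PosDef.fromBlocks₂₂ A B hD).1 h.posSemidef
  rw [hsemidef.posDef_iff_isUnit, ← invOf_eq_nonsing_inv]
  exact isUnit_fromBlocks_iff_of_invertible₂₂.1 h.isUnit

end SchurComplement

section Kriging

variable {ι : Type*} {S : Matrix ι ι ℝ} {k p : ι → ℝ} {c a : ℝ}

/-- The joint covariance matrix `[[c, kᵀ], [k, S]]` of a target of variance `c` and observations
of covariance `S` whose covariances with the target are `k`. -/
def jointCov (c : ℝ) (k : ι → ℝ) (S : Matrix ι ι ℝ) : Matrix (Unit ⊕ ι) (Unit ⊕ ι) ℝ :=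
  fromBlocks (of fun _ _ => c) (of fun _ j => k j) (of fun i _ => k i) S

theorem jointCov_smul (v c : ℝ) (k : ι → ℝ) (S : Matrix ι ι ℝ) :
    jointCov (v * c) (v • k) (v • S) = v • jointCov c k S := by
  rw [jointCov, jointCov, fromBlocks_smul]
  rfl

theorem posDef_of_posDef_jointCov (hΔ : (jointCov c k S).PosDef) : S.PosDef :=
  hΔ.submatrix Sum.inr_injective

variable [Fintype ι] [DecidableEq ι]

/-- The generalized least squares estimate of the coefficient `u` in `y = u p + noise`, the noise
having covariance `S`. -/
noncomputable def glsCoeff (S : Matrix ι ι ℝ) (p y : ι → ℝ) : ℝ :=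
  (p ⬝ᵥ S⁻¹ *ᵥ y) / (p ⬝ᵥ S⁻¹ *ᵥ p)

/-- The kriging predictor of the target from the observations `y`, when the unknown mean is an
unknown multiple of the trend with value `a` at the target and `p` at the observations. -/
noncomputable def krigingMean (k : ι → ℝ) (S : Matrix ι ι ℝ) (a : ℝ) (p y : ι → ℝ) : ℝ :=
  glsCoeff S p y * a + k ⬝ᵥ S⁻¹ *ᵥ (y - glsCoeff S p y • p)

/-- The mean squared error of the kriging predictor `krigingMean k S a p`. -/
noncomputable def krigingVariance (c : ℝ) (k : ι → ℝ) (S : Matrix ι ι ℝ) (a : ℝ) (p : ι → ℝ) : ℝ :=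
  c - k ⬝ᵥ S⁻¹ *ᵥ k + (a - p ⬝ᵥ S⁻¹ *ᵥ k) ^ 2 / (p ⬝ᵥ S⁻¹ *ᵥ p)

/-- The density at `x` of the centered Gaussian vector of covariance `Δ`, without its normalizing
constant. -/
noncomputable def gaussianWeight {κ : Type*} [Fintype κ] [DecidableEq κ] (Δ : Matrix κ κ ℝ)
    (x : κ → ℝ) : ℝ :=
  exp (-(1 / 2) * (x ⬝ᵥ Δ⁻¹ *ᵥ x))

theorem dotProduct_inv_mulVec_comm (hS : S.IsSymm) (x y : ι → ℝ) :
    x ⬝ᵥ S⁻¹ *ᵥ y = y ⬝ᵥ S⁻¹ *ᵥ x := by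
  rw [dotProduct_mulVec, ← mulVec_transpose, transpose_nonsing_inv, hS.eq, dotProduct_comm]

theorem dotProduct_inv_smul_mulVec {v : ℝ} (hv : v ≠ 0) (hS : IsUnit S) (x y : ι → ℝ) :
    x ⬝ᵥ (v • S)⁻¹ *ᵥ y = v⁻¹ * (x ⬝ᵥ S⁻¹ *ᵥ y) := by
  have hinv : (v • S)⁻¹ = v⁻¹ • S⁻¹ :=
    Matrix.inv_smul' S (Units.mk0 v hv) ((isUnit_iff_isUnit_det S).1 hS)
  rw [hinv, smul_mulVec, dotProduct_smul, smul_eq_mul]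

theorem dotProduct_inv_mulVec_sub_smul (hS : S.IsSymm) (k p y : ι → ℝ) (u : ℝ) :
    k ⬝ᵥ S⁻¹ *ᵥ (y - u • p) = k ⬝ᵥ S⁻¹ *ᵥ y - u * (p ⬝ᵥ S⁻¹ *ᵥ k) := by
  rw [mulVec_sub, mulVec_smul, dotProduct_sub, dotProduct_smul, smul_eq_mul,
    dotProduct_inv_mulVec_comm hS k p]

theorem glsCoeff_smul {v : ℝ} (hv : v ≠ 0) (hS : IsUnit S) (p y : ι → ℝ) :
    glsCoeff (v • S) p y = glsCoeff S p y := by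
  simp only [glsCoeff, dotProduct_inv_smul_mulVec hv hS]
  exact mul_div_mul_left _ _ (inv_ne_zero hv)

theorem krigingMean_eq (hS : S.IsSymm) (k : ι → ℝ) (a : ℝ) (p y : ι → ℝ) :
    krigingMean k S a p y =
      k ⬝ᵥ S⁻¹ *ᵥ y + glsCoeff S p y * (a - p ⬝ᵥ S⁻¹ *ᵥ k) := by
  rw [krigingMean, dotProduct_inv_mulVec_sub_smul hS]
  ring

theorem krigingMean_smul {v : ℝ} (hv : v ≠ 0) (hS : IsUnit S) (k : ι → ℝ) (a : ℝ) (p y : ι → ℝ) :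
    krigingMean (v • k) (v • S) a p y = krigingMean k S a p y := by
  simp only [krigingMean, glsCoeff_smul hv hS, smul_dotProduct, dotProduct_inv_smul_mulVec hv hS,
    smul_eq_mul, inv_mul_cancel_left₀ hv]

theorem krigingVariance_smul {v : ℝ} (hv : v ≠ 0) (hS : IsUnit S) (c : ℝ) (k : ι → ℝ) (a : ℝ)
    (p : ι → ℝ) :
    krigingVariance (v * c) (v • k) (v • S) a p = v * krigingVariance c k S a p := by
  simp only [krigingVariance, mulVec_smul, smul_dotProduct, dotProduct_smul,
    dotProduct_inv_smul_mulVec hv hS, smul_eq_mul, mul_inv_cancel_left₀ hv]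
  field_simp

theorem dotProduct_inv_mulVec_self_pos (hS : S.PosDef) (hp : p ≠ 0) : 0 < p ⬝ᵥ S⁻¹ *ᵥ p := by
  simpa using hS.inv.dotProduct_mulVec_pos hp

theorem schur_complement_jointCov (c : ℝ) (k : ι → ℝ) (S : Matrix ι ι ℝ) :
    (of fun _ _ => c : Matrix Unit Unit ℝ) - (of fun _ j => k j) * S⁻¹ * (of fun i _ => k i) =
      of fun _ _ => c - k ⬝ᵥ S⁻¹ *ᵥ k := by
  ext
  rw [dotProduct_mulVec]
  rfl

theorem posDef_schur_complement_jointCov (hΔ : (jointCov c k S).PosDef) :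
    (of fun _ _ => c - k ⬝ᵥ S⁻¹ *ᵥ k : Matrix Unit Unit ℝ).PosDef := by
  rw [← schur_complement_jointCov]
  exact posDef_schur_complement hΔ

theorem sub_dotProduct_inv_mulVec_pos (hΔ : (jointCov c k S).PosDef) :
    0 < c - k ⬝ᵥ S⁻¹ *ᵥ k :=
  (posDef_schur_complement_jointCov hΔ).diag_pos (i := ())

theorem krigingVariance_pos (hΔ : (jointCov c k S).PosDef) (hp : p ≠ 0) :
    0 < krigingVariance c k S a p := by
  have hs := sub_dotProduct_inv_mulVec_pos hΔ
  have hr := dotProduct_inv_mulVec_self_pos (posDef_of_posDef_jointCov hΔ) hp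
  rw [krigingVariance]
  positivity

theorem dotProduct_inv_jointCov_mulVec (hΔ : (jointCov c k S).PosDef) (x : ℝ) (w : ι → ℝ) :
    Sum.elim (fun _ => x) w ⬝ᵥ (jointCov c k S)⁻¹ *ᵥ Sum.elim (fun _ => x) w =
      (x - k ⬝ᵥ S⁻¹ *ᵥ w) ^ 2 / (c - k ⬝ᵥ S⁻¹ *ᵥ k) + w ⬝ᵥ S⁻¹ *ᵥ w := by
  have hS := posDef_of_posDef_jointCov hΔ
  have hsymm : S.IsSymm := isHermitian_iff_isSymm.1 hS.isHermitian
  rw [jointCov, dotProduct_inv_fromBlocks_mulVec hS.isUnit]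
  · rw [schur_complement_jointCov]
    have hright : (fun _ => x) - (of fun _ j => k j) *ᵥ S⁻¹ *ᵥ w =
        fun _ : Unit => x - k ⬝ᵥ S⁻¹ *ᵥ w := rfl
    have hleft : (fun _ => x) - w ᵥ* S⁻¹ ᵥ* (of fun i _ => k i) =
        fun _ : Unit => x - k ⬝ᵥ S⁻¹ *ᵥ w := by
      rw [dotProduct_inv_mulVec_comm hsymm k w, dotProduct_mulVec]
      rfl
    rw [hright, hleft, inv_subsingleton (of fun _ _ : Unit => _)]
    simp only [dotProduct, Finset.univ_unique, PUnit.default_eq_unit, of_apply,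
      Ring.inverse_eq_inv', mulVec_diagonal, Finset.sum_const, Finset.card_singleton, one_smul,
      div_eq_mul_inv]
    ring
  · rw [schur_complement_jointCov]
    exact (posDef_schur_complement_jointCov hΔ).isUnit

theorem dotProduct_inv_mulVec_residual (hS : S.IsSymm) (hp : p ⬝ᵥ S⁻¹ *ᵥ p ≠ 0) (y : ι → ℝ)
    (u : ℝ) :
    (y - u • p) ⬝ᵥ S⁻¹ *ᵥ (y - u • p) =
      (u - glsCoeff S p y) ^ 2 * (p ⬝ᵥ S⁻¹ *ᵥ p) +
        (y - glsCoeff S p y • p) ⬝ᵥ S⁻¹ *ᵥ (y - glsCoeff S p y • p) := by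
  simp only [glsCoeff, mulVec_sub, mulVec_smul, dotProduct_sub, dotProduct_smul, sub_dotProduct,
    smul_dotProduct, smul_eq_mul, dotProduct_inv_mulVec_comm hS y p]
  field_simp
  ring

theorem exists_gaussianWeight_eq_mul_gaussianPDFReal (hΔ : (jointCov c k S).PosDef) (hp : p ≠ 0)
    (a : ℝ) (y : ι → ℝ) :
    ∃ C ≠ 0, ∀ z u : ℝ,
      gaussianWeight (jointCov c k S) (Sum.elim (fun _ => z) y - u • Sum.elim (fun _ => a) p) =
        C * (gaussianPDFReal (glsCoeff S p y) (p ⬝ᵥ S⁻¹ *ᵥ p)⁻¹.toNNReal u *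
          gaussianPDFReal (k ⬝ᵥ S⁻¹ *ᵥ y + u * (a - p ⬝ᵥ S⁻¹ *ᵥ k))
            (c - k ⬝ᵥ S⁻¹ *ᵥ k).toNNReal z) := by
  have hS := posDef_of_posDef_jointCov hΔ
  have hsymm : S.IsSymm := isHermitian_iff_isSymm.1 hS.isHermitian
  have hr := dotProduct_inv_mulVec_self_pos hS hp
  have hs := sub_dotProduct_inv_mulVec_pos hΔ
  set r := p ⬝ᵥ S⁻¹ *ᵥ p
  set s := c - k ⬝ᵥ S⁻¹ *ᵥ k
  set β := glsCoeff S p y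
  set q := (y - β • p) ⬝ᵥ S⁻¹ *ᵥ (y - β • p)
  refine ⟨exp (-q / 2) * (√(2 * π * r⁻¹) * √(2 * π * s)), by positivity, fun z u => ?_⟩
  set t := k ⬝ᵥ S⁻¹ *ᵥ y + u * (a - p ⬝ᵥ S⁻¹ *ᵥ k) with ht
  have hdev : Sum.elim (fun _ : Unit => z) y - u • Sum.elim (fun _ => a) p =
      Sum.elim (fun _ => z - u * a) (y - u • p) := by
    ext (i | i) <;> rfl
  have hpred : z - u * a - k ⬝ᵥ S⁻¹ *ᵥ (y - u • p) = z - t := by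
    rw [dotProduct_inv_mulVec_sub_smul hsymm, ht]
    ring
  calc gaussianWeight (jointCov c k S) (Sum.elim (fun _ => z) y - u • Sum.elim (fun _ => a) p)
      = exp (-(1 / 2) * ((z - t) ^ 2 / s + ((u - β) ^ 2 * r + q))) := by
        rw [hdev, gaussianWeight, dotProduct_inv_jointCov_mulVec hΔ, hpred,
          dotProduct_inv_mulVec_residual hsymm hr.ne']
    _ = exp (-q / 2) * (exp (-(u - β) ^ 2 / (2 * r⁻¹)) * exp (-(z - t) ^ 2 / (2 * s))) := by
        rw [← exp_add, ← exp_add]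
        congr 1
        field_simp
        ring
    _ = _ := by
        rw [exp_neg_sq_div_eq_sqrt_mul_gaussianPDFReal (inv_pos.2 hr),
          exp_neg_sq_div_eq_sqrt_mul_gaussianPDFReal hs]
        ring

theorem toNNReal_krigingVariance (hΔ : (jointCov c k S).PosDef) (hp : p ≠ 0) (a : ℝ) :
    (krigingVariance c k S a p).toNNReal = (c - k ⬝ᵥ S⁻¹ *ᵥ k).toNNReal +
      ‖a - p ⬝ᵥ S⁻¹ *ᵥ k‖₊ ^ 2 * (p ⬝ᵥ S⁻¹ *ᵥ p)⁻¹.toNNReal := by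
  have hs := sub_dotProduct_inv_mulVec_pos hΔ
  have hr := dotProduct_inv_mulVec_self_pos (posDef_of_posDef_jointCov hΔ) hp
  rw [krigingVariance, toNNReal_add hs.le (by positivity), div_eq_mul_inv,
    toNNReal_mul (sq_nonneg _), toNNReal_eq_nnnorm_of_nonneg (sq_nonneg _), nnnorm_pow]

theorem gaussian_mixture_random_mean_posterior_general {α : Type*} {l : Filter α}
    [l.IsCountablyGenerated] {lo hi : α → ℝ} (hlo : Tendsto lo l atBot) (hhi : Tendsto hi l atTop)
    (hΔ : (jointCov c k S).PosDef) (hp : p ≠ 0) (a : ℝ) (y : ι → ℝ) (z : ℝ) :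
    Tendsto (fun i =>
        (∫ u in lo i..hi i,
          gaussianWeight (jointCov c k S)
            (Sum.elim (fun _ => z) y - u • Sum.elim (fun _ => a) p)) /
          ∫ z', ∫ u in lo i..hi i,
            gaussianWeight (jointCov c k S)
              (Sum.elim (fun _ => z') y - u • Sum.elim (fun _ => a) p)) l
      (𝓝 (gaussianPDFReal (krigingMean k S a p y) (krigingVariance c k S a p).toNNReal z)) := by
  have hS := posDef_of_posDef_jointCov hΔ
  have hsymm : S.IsSymm := isHermitian_iff_isSymm.1 hS.isHermitian
  have hr := dotProduct_inv_mulVec_self_pos hS hp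
  have hs := sub_dotProduct_inv_mulVec_pos hΔ
  obtain ⟨C, hC, hweight⟩ := exists_gaussianWeight_eq_mul_gaussianPDFReal hΔ hp a y
  simp_rw [hweight, intervalIntegral.integral_const_mul, integral_const_mul,
    mul_div_mul_left _ _ hC]
  rw [krigingMean_eq hsymm, toNNReal_krigingVariance hΔ hp]
  exact tendsto_truncated_gaussian_mixture _ _ _ hlo hhi (by simpa using hr) (by simpa using hs) z

end Kriging

/-- Theorem 2 of the paper (univariate form): for the prior field `Y_x = U + W_x` with `U`
uniform on `[−m, m]`, the conditional density `g_m(z)` of `Y_x` given the `n` observations `y`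
converges, as `m → ∞`, to the Gaussian density with mean `μ + kᵀ Σ⁻¹ (y − μ𝟙)`, where
`μ = (𝟙ᵀ Σ⁻¹ y)/(𝟙ᵀ Σ⁻¹ 𝟙)`, and variance
`σ² (1 − kᵀ Σ⁻¹ k + (1 − 𝟙ᵀ Σ⁻¹ k)²/(𝟙ᵀ Σ⁻¹ 𝟙))`. -/
theorem gaussian_mixture_random_mean_posterior
    (n : ℕ) (hn : 1 ≤ n)
    (S : Matrix (Fin n) (Fin n) ℝ) (hS : S.PosDef)
    (k : Fin n → ℝ) (σ : ℝ) (hσ : 0 < σ)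
    (Δ : Matrix (Unit ⊕ Fin n) (Unit ⊕ Fin n) ℝ)
    (hΔdef : Δ = σ ^ 2 •
      Matrix.fromBlocks (Matrix.of fun _ _ => (1 : ℝ)) (Matrix.of fun _ j => k j)
        (Matrix.of fun i _ => k i) S)
    (hΔ : Δ.PosDef)
    (y : Fin n → ℝ)
    (onen : Fin n → ℝ) (honen : onen = fun _ => (1 : ℝ))
    (one1 : Unit ⊕ Fin n → ℝ) (hone1 : one1 = fun _ => (1 : ℝ))
    (μ : ℝ) (hμ : μ = (onen ⬝ᵥ S⁻¹ *ᵥ y) / (onen ⬝ᵥ S⁻¹ *ᵥ onen))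
    (g : ℝ → ℝ → ℝ)
    (hg : ∀ m > (0 : ℝ), ∀ z : ℝ, g m z =
      (∫ u in (-m)..m,
          Real.exp (-(1 / 2) *
            ((Sum.elim (fun _ => z) y - u • one1) ⬝ᵥ
              Δ⁻¹ *ᵥ (Sum.elim (fun _ => z) y - u • one1)))) /
        (∫ z' : ℝ, ∫ u in (-m)..m,
          Real.exp (-(1 / 2) *
            ((Sum.elim (fun _ => z') y - u • one1) ⬝ᵥ
              Δ⁻¹ *ᵥ (Sum.elim (fun _ => z') y - u • one1))))) :
    ∀ z : ℝ,
      Tendsto (fun m : ℝ => g m z) atTop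
        (nhds
          ((2 * π * (σ ^ 2 * (1 - k ⬝ᵥ S⁻¹ *ᵥ k +
              (1 - onen ⬝ᵥ S⁻¹ *ᵥ k) ^ 2 / (onen ⬝ᵥ S⁻¹ *ᵥ onen)))) ^ (-(1 : ℝ) / 2) *
            Real.exp (-(z - (μ + k ⬝ᵥ S⁻¹ *ᵥ (y - μ • onen))) ^ 2 /
              (2 * (σ ^ 2 * (1 - k ⬝ᵥ S⁻¹ *ᵥ k +
                (1 - onen ⬝ᵥ S⁻¹ *ᵥ k) ^ 2 / (onen ⬝ᵥ S⁻¹ *ᵥ onen))))))) := by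
  subst hone1 hΔdef honen
  intro z
  have hΔ_eq : σ ^ 2 • fromBlocks (of fun _ _ => (1 : ℝ)) (of fun _ j => k j)
      (of fun i _ => k i) S = jointCov (σ ^ 2 * 1) (σ ^ 2 • k) (σ ^ 2 • S) :=
    (jointCov_smul _ _ _ _).symm
  have hσ2 : σ ^ 2 ≠ 0 := by positivity
  have hp : (fun _ : Fin n => (1 : ℝ)) ≠ 0 := fun h => one_ne_zero (congrFun h ⟨0, hn⟩)
  rw [hΔ_eq] at hΔ
  have hlim := gaussian_mixture_random_mean_posterior_general tendsto_neg_atTop_atBot tendsto_id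
    hΔ hp 1 y z
  rw [gaussianPDFReal_toNNReal (krigingVariance_pos hΔ hp).le, krigingMean_smul hσ2 hS.isUnit,
    krigingVariance_smul hσ2 hS.isUnit, krigingMean, ← show μ = glsCoeff S _ y from hμ, mul_one,
    mul_one, Sum.elim_lam_const_lam_const] at hlim
  refine hlim.congr' ?_
  filter_upwards [eventually_gt_atTop 0] with m hm
  rw [hg m hm z, hΔ_eq, mul_one]
  rfl
end

section
/- Let η be the uniform (Lebesgue) probability measure on [0,1], so that its cumulative distribution function K is the identity. Then for every probability measure m on [0,1], the operator L_η preserves the first moment: ∫₀¹ t dm'(t) = ∫₀¹ t dm(t), where m' := L_η(m). -/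
open MeasureTheory Set

/-- The tail distribution `F_m(α) := m((α,1])` of a probability measure `m` on `[0,1]`. -/
noncomputable def tailDist (m : Measure ℝ) (α : ℝ) : ℝ := (m (Set.Ioc α 1)).toReal

/-- The generalized inverse `S⁻¹(t) := sup {α ∈ [0,1] : S(α) > t}` (with `sup ∅ := 0`). -/
noncomputable def genInv (S : ℝ → ℝ) (t : ℝ) : ℝ :=
  sSup {α ∈ Set.Icc (0 : ℝ) 1 | t < S α}

/-!
By the layer-cake formula, the first moment of a measure on `[0,1]` is `∫₀¹ m((t,1]) dt`.
For `m'` the integrand is `η([0, F_m⁻¹(t)])`. Since `F_m` is decreasing, its superlevel set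
`{α | F_m(α) > t}` is the interval from `0` to `F_m⁻¹(t)`, possibly without its right endpoint,
which an atomless `η` does not see. So the integrand is `η({α | F_m(α) > t})`, and the layer-cake
formula read backwards gives `∫ t dm' = ∫ F_m dη`. For Lebesgue measure `η` the right-hand side is
again the first moment of `m`.
-/

theorem setIntegral_eq_setIntegral_Ioc_measureReal_lt {Ω : Type*} [MeasurableSpace Ω]
    {μ : Measure Ω} {s : Set Ω} {f : Ω → ℝ} {M : ℝ} (hs : MeasurableSet s)
    (hf : IntegrableOn f s μ) (hf_nonneg : ∀ x ∈ s, 0 ≤ f x) (hf_le : ∀ x ∈ s, f x ≤ M) :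
    ∫ x in s, f x ∂μ = ∫ t in Ioc 0 M, μ.real {x ∈ s | t < f x} := by
  rw [hf.integral_eq_integral_Ioc_meas_le (ae_restrict_of_forall_mem hs hf_nonneg)
    (ae_restrict_of_forall_mem hs hf_le)]
  refine integral_congr_ae ?_
  filter_upwards [meas_le_ae_eq_meas_lt (μ.restrict s) (volume.restrict (Ioc 0 M)) f] with t ht
  rw [measureReal_def, ht, ← measureReal_def, measureReal_restrict_apply' hs,
    ofPred_inter_eq_sep]

section TailDist

variable (m : Measure ℝ)

theorem tailDist_nonneg (α : ℝ) : 0 ≤ tailDist m α := measureReal_nonneg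

theorem tailDist_le_one [IsProbabilityMeasure m] (α : ℝ) : tailDist m α ≤ 1 := measureReal_le_one

theorem antitone_tailDist [IsLocallyFiniteMeasure m] : Antitone (tailDist m) :=
  fun _ _ h => measureReal_mono (Ioc_subset_Ioc_left h) measure_Ioc_lt_top.ne

theorem setIntegral_Icc_id_eq_setIntegral_tailDist [IsLocallyFiniteMeasure m] :
    ∫ t in Icc (0 : ℝ) 1, t ∂m = ∫ α in Ioc (0 : ℝ) 1, tailDist m α := by
  rw [setIntegral_eq_setIntegral_Ioc_measureReal_lt measurableSet_Icc
    continuous_id'.integrableOn_Icc (fun _ hx => hx.1) (fun _ hx => hx.2)]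
  refine setIntegral_congr_fun measurableSet_Ioc fun t ht => congrArg m.real ?_
  ext x
  exact ⟨fun hx => ⟨hx.2, hx.1.2⟩, fun hx => ⟨⟨(ht.1.trans hx.1).le, hx.2⟩, hx.1⟩⟩

end TailDist

section GenInv

variable {S : ℝ → ℝ} {t : ℝ}

theorem superlevel_subset_Icc_genInv :
    {α ∈ Icc (0 : ℝ) 1 | t < S α} ⊆ Icc 0 (genInv S t) :=
  fun _ hα => ⟨hα.1.1, le_csSup ⟨1, fun _ hβ => hβ.1.2⟩ hα⟩

theorem Ico_genInv_subset_superlevel (hS : AntitoneOn S (Icc 0 1)) :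
    Ico 0 (genInv S t) ⊆ {α ∈ Icc (0 : ℝ) 1 | t < S α} := by
  rintro α ⟨hα0, hα⟩
  have hne : {β ∈ Icc (0 : ℝ) 1 | t < S β}.Nonempty := by
    by_contra! hempty
    rw [genInv, hempty, Real.sSup_empty] at hα
    exact hα0.not_gt hα
  obtain ⟨β, ⟨hβ, htβ⟩, hαβ⟩ := exists_lt_of_lt_csSup hne hα
  have hα_mem : α ∈ Icc (0 : ℝ) 1 := ⟨hα0, hαβ.le.trans hβ.2⟩
  exact ⟨hα_mem, htβ.trans_le (hS hα_mem hβ hαβ.le)⟩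

theorem measure_Icc_genInv (η : Measure ℝ) [NullSingletonClass η] (hS : AntitoneOn S (Icc 0 1)) :
    η (Icc 0 (genInv S t)) = η {α ∈ Icc (0 : ℝ) 1 | t < S α} := by
  refine le_antisymm ?_ (measure_mono superlevel_subset_Icc_genInv)
  rw [← measure_congr (Ico_ae_eq_Icc (μ := η))]
  exact measure_mono (Ico_genInv_subset_superlevel hS)

theorem setIntegral_measureReal_Icc_genInv (η : Measure ℝ) [NullSingletonClass η]
    [IsLocallyFiniteMeasure η] (hS : AntitoneOn S (Icc 0 1)) (hS0 : S 0 ≤ 1) (hS1 : 0 ≤ S 1) :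
    ∫ t in Ioc (0 : ℝ) 1, η.real (Icc 0 (genInv S t)) = ∫ α in Icc (0 : ℝ) 1, S α ∂η := by
  have hS_nonneg : ∀ α ∈ Icc (0 : ℝ) 1, 0 ≤ S α := fun _ hα =>
    hS1.trans (hS hα (right_mem_Icc.2 zero_le_one) hα.2)
  have hS_le : ∀ α ∈ Icc (0 : ℝ) 1, S α ≤ 1 := fun _ hα =>
    (hS (left_mem_Icc.2 zero_le_one) hα hα.1).trans hS0
  rw [setIntegral_eq_setIntegral_Ioc_measureReal_lt measurableSet_Icc
    (hS.integrableOn_isCompact isCompact_Icc) hS_nonneg hS_le]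
  simp only [measureReal_def, measure_Icc_genInv η hS]

end GenInv

theorem uniform_eta_preserves_first_moment_general {η m m' : Measure ℝ}
    [NullSingletonClass η] [IsLocallyFiniteMeasure η] [IsLocallyFiniteMeasure m]
    [IsLocallyFiniteMeasure m'] (hm : tailDist m 0 ≤ 1)
    (htail : ∀ t ∈ Icc (0 : ℝ) 1, tailDist m' t = η.real (Icc 0 (genInv (tailDist m) t))) :
    ∫ t in Icc (0 : ℝ) 1, t ∂m' = ∫ α in Icc (0 : ℝ) 1, tailDist m α ∂η := by
  calc ∫ t in Icc (0 : ℝ) 1, t ∂m'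
    _ = ∫ t in Ioc (0 : ℝ) 1, tailDist m' t := setIntegral_Icc_id_eq_setIntegral_tailDist m'
    _ = ∫ t in Ioc (0 : ℝ) 1, η.real (Icc 0 (genInv (tailDist m) t)) :=
      setIntegral_congr_fun measurableSet_Ioc fun t ht => htail t (Ioc_subset_Icc_self ht)
    _ = ∫ α in Icc (0 : ℝ) 1, tailDist m α ∂η :=
      setIntegral_measureReal_Icc_genInv η ((antitone_tailDist m).antitoneOn _) hm
        (tailDist_nonneg m 1)

/-- When `η` is the uniform (Lebesgue) probability measure on `[0,1]`, with cumulative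
distribution function `K`, the operator `L_η` (which maps `m` to the probability measure `m'`
on `[0,1]` with tail distribution `K ∘ F_m⁻¹`) preserves the first moment:
`∫₀¹ t dm'(t) = ∫₀¹ t dm(t)`. -/
theorem uniform_eta_preserves_first_moment
    (η : Measure ℝ) (hη : η = volume.restrict (Set.Icc (0 : ℝ) 1))
    (K : ℝ → ℝ) (hK : K = fun u => (η (Set.Icc (0 : ℝ) u)).toReal)
    (m : Measure ℝ) (hm : IsProbabilityMeasure m) (hmsupp : m (Set.Icc (0 : ℝ) 1)ᶜ = 0)
    (m' : Measure ℝ) (hm' : IsProbabilityMeasure m') (hm'supp : m' (Set.Icc (0 : ℝ) 1)ᶜ = 0)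
    (htail : ∀ t ∈ Set.Icc (0 : ℝ) 1, tailDist m' t = K (genInv (tailDist m) t)) :
    ∫ t in Set.Icc (0 : ℝ) 1, t ∂m' = ∫ t in Set.Icc (0 : ℝ) 1, t ∂m := by
  subst hη hK
  rw [uniform_eta_preserves_first_moment_general (tailDist_le_one m 0) htail,
    Measure.restrict_restrict_of_subset subset_rfl, integral_Icc_eq_integral_Ioc,
    ← setIntegral_Icc_id_eq_setIntegral_tailDist]
end
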